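/- Fix k ≥ 1 and suppose there exist 2-adic integers x₀, …, x_{k-1} ∈ ℤ₂ such that for every i < k, either (∃ y ∈ ℤ₂, x_i = 2y ∧ x_{(i+1) mod k} = y) or (∃ y ∈ ℤ₂, x_i = 2y + 1 ∧ x_{(i+1) mod k} = 3(2y + 1) + 1). Let φ_k be the positive existential ring sentence asserting the existence of x₀, …, x_{k-1} satisfying these cyclic Collatz transition relations. Then φ_k is not algebraically refutable: there is no finite list of positive existential sentences θ₁, …, θₙ, each true in ℤ, such that every commutative ring satisfying all of θ₁, …, θₙ satisfies ¬φ_k. -/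

import Mathlib

/-!
`ℤ₂` itself defeats every refutation candidate. Positive existential formulas are preserved by
homomorphisms of structures (`IsPositiveExistential.realize_map`), so each positive existential
sentence true in `ℤ` is true in `ℤ₂`, the image being taken along the canonical map `ℤ → ℤ₂`.
Hence `ℤ₂` is a commutative ring satisfying all the `θ`s, while the given 2-adic cycle shows that
it also satisfies `φ`.
-/

open FirstOrder FirstOrder.Ring Language

/-- A bounded formula in a first-order language is *positive existential* (Σ₁⁺) if it is
built from atomic equalities between terms using only conjunction, disjunction, and
existential quantification. -/
inductive IsPositiveExistential {L : Language} {α : Type*} :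
    ∀ {n : ℕ}, L.BoundedFormula α n → Prop
  | equal {n : ℕ} (t u : L.Term (α ⊕ Fin n)) : IsPositiveExistential (t.bdEqual u)
  | inf {n : ℕ} {φ ψ : L.BoundedFormula α n} :
      IsPositiveExistential φ → IsPositiveExistential ψ → IsPositiveExistential (φ ⊓ ψ)
  | sup {n : ℕ} {φ ψ : L.BoundedFormula α n} :
      IsPositiveExistential φ → IsPositiveExistential ψ → IsPositiveExistential (φ ⊔ ψ)
  | ex {n : ℕ} {φ : L.BoundedFormula α (n + 1)} :
      IsPositiveExistential φ → IsPositiveExistential φ.ex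

attribute [local instance] FirstOrder.Ring.compatibleRingOfRing

/-- Homomorphisms of structures preserve positive existential formulas. -/
theorem IsPositiveExistential.realize_map {L : Language} {α M N : Type*}
    [L.Structure M] [L.Structure N] (f : M →[L] N) {n : ℕ} {φ : L.BoundedFormula α n}
    (hφ : IsPositiveExistential φ) (v : α → M) (xs : Fin n → M) (h : φ.Realize v xs) :
    φ.Realize (f ∘ v) (f ∘ xs) := by
  induction hφ with
  | equal t u =>
    rw [BoundedFormula.realize_bdEqual] at h ⊢
    rw [← Sum.comp_elim, HomClass.realize_term, HomClass.realize_term, h]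
  | inf _ _ ih₁ ih₂ =>
    rw [BoundedFormula.realize_inf] at h ⊢
    exact ⟨ih₁ xs h.1, ih₂ xs h.2⟩
  | sup _ _ ih₁ ih₂ =>
    rw [BoundedFormula.realize_sup] at h ⊢
    exact h.imp (ih₁ xs) (ih₂ xs)
  | ex _ ih =>
    rw [BoundedFormula.realize_ex] at h ⊢
    obtain ⟨a, ha⟩ := h
    refine ⟨f a, ?_⟩
    rw [← Fin.comp_snoc]
    exact ih _ ha

/-- A ring homomorphism, viewed as a homomorphism of structures for the language of rings. -/
def ringHomToLanguageHom {R S : Type*} [CommRing R] [CommRing S] (f : R →+* S) :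
    R →[Language.ring] S where
  toFun := f
  map_fun' g xs := by cases g <;> simp
  map_rel' r := by cases r

/-- Positive existential sentences of ring theory transfer along ring homomorphisms. -/
theorem IsPositiveExistential.models_of_ringHom {R S : Type*} [CommRing R] [CommRing S]
    (f : R →+* S) {θ : Language.ring.Sentence} (hθ : IsPositiveExistential θ) (h : R ⊨ θ) :
    S ⊨ θ := by
  have key := hθ.realize_map (ringHomToLanguageHom f) default default h
  rwa [Subsingleton.elim (_ ∘ (default : Empty → R)) default,
    Subsingleton.elim (_ ∘ (default : Fin 0 → R)) default] at key

/-- If the `2`-adic integers contain a cyclic orbit `x₀, …, x_{k-1}` of the Collatz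
transition relation, then the positive existential ring sentence `φ_k` asserting the
existence of such a period-`k` Collatz cycle is not algebraically refutable: there is no
finite list of positive existential sentences, each true in `ℤ`, such that every
commutative ring satisfying all of them satisfies `¬φ_k`. -/
theorem collatz_period_k_not_algebraically_refutable
    (k : ℕ) (hk : 1 ≤ k) (x : Fin k → ℤ_[2])
    (hx : ∀ i : Fin k,
      (∃ y : ℤ_[2], x i = 2 * y ∧ x ⟨((i : ℕ) + 1) % k, Nat.mod_lt _ hk⟩ = y) ∨
      (∃ y : ℤ_[2], x i = 2 * y + 1 ∧
        x ⟨((i : ℕ) + 1) % k, Nat.mod_lt _ hk⟩ = 3 * (2 * y + 1) + 1))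
    (φ : Language.ring.Sentence) (hφpos : IsPositiveExistential φ)
    (hφ : ∀ (R : Type) [CommRing R],
      (R ⊨ φ) ↔ ∃ z : Fin k → R, ∀ i : Fin k,
        (∃ y : R, z i = 2 * y ∧ z ⟨((i : ℕ) + 1) % k, Nat.mod_lt _ hk⟩ = y) ∨
        (∃ y : R, z i = 2 * y + 1 ∧
          z ⟨((i : ℕ) + 1) % k, Nat.mod_lt _ hk⟩ = 3 * (2 * y + 1) + 1)) :
    ¬ ∃ θs : List Language.ring.Sentence,
        (∀ θ ∈ θs, IsPositiveExistential θ ∧ ((ℤ : Type) ⊨ θ)) ∧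
        (∀ (S : Type) [CommRing S], (∀ θ ∈ θs, S ⊨ θ) → ¬ (S ⊨ φ)) := by
  rintro ⟨θs, hθ, href⟩
  exact href ℤ_[2] (fun θ hmem =>
    (hθ θ hmem).1.models_of_ringHom (Int.castRingHom ℤ_[2]) (hθ θ hmem).2) ((hφ ℤ_[2]).2 ⟨x, hx⟩)
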